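/- (Clarkson inequality for Schatten classes, case 1 < p ≤ 2.) Let 1 < p ≤ 2 and q = p/(p−1). For all T₁, T₂ in the Schatten class S_p(H) one has (‖T₁ + T₂‖_p^q + ‖T₁ − T₂‖_p^q)^{1/q} ≤ 2^{1/q} (‖T₁‖_p^p + ‖T₂‖_p^p)^{1/p}. -/

import Mathlib

open scoped InnerProductSpace ENNReal Topology
open Filter

/-- An Orlicz function (N-function): convex, nondecreasing and continuous on `[0, ∞)`,
vanishing at `0`, positive on `(0, ∞)` and tending to `∞` at `∞`. -/
structure OrliczFunction : Type where
  toFun : ℝ → ℝ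
  convexOn : ConvexOn ℝ (Set.Ici (0 : ℝ)) toFun
  monotoneOn : MonotoneOn toFun (Set.Ici (0 : ℝ))
  continuousOn : ContinuousOn toFun (Set.Ici (0 : ℝ))
  map_zero : toFun 0 = 0
  pos : ∀ x : ℝ, 0 < x → 0 < toFun x
  tendsto_atTop : Filter.Tendsto toFun Filter.atTop Filter.atTop

/-- `ψ` is the complementary N-function of `φ`: `ψ(y) = sup {x·y − φ(x) : x ≥ 0}`. -/
def OrliczFunction.IsComplementary (φ ψ : OrliczFunction) : Prop :=
  ∀ y : ℝ, 0 ≤ y → ψ.toFun y = sSup {v : ℝ | ∃ x : ℝ, 0 ≤ x ∧ v = x * y - φ.toFun x}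

/-- `g` is the (two-sided) inverse of `f` on `[0, ∞)`, taking nonnegative values. -/
def IsOrliczInverse (g f : ℝ → ℝ) : Prop :=
  (∀ u : ℝ, 0 ≤ u → 0 ≤ g u) ∧ (∀ u : ℝ, 0 ≤ u → f (g u) = u) ∧
    ∀ u : ℝ, 0 ≤ u → g (f u) = u

variable {H : Type} [NormedAddCommGroup H] [InnerProductSpace ℂ H] [CompleteSpace H]

/-- The `n`-th singular value of an operator `T` (indexed from `n = 0`), described as the
`n`-th approximation number: the distance from `T` to the operators of rank `≤ n`.  For a
compact operator on a Hilbert space this is exactly the `(n+1)`-st eigenvalue of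
`|T| = (T*T)^(1/2)` in decreasing order. -/
noncomputable def sValue (T : H →L[ℂ] H) (n : ℕ) : ℝ :=
  sInf {c : ℝ | ∃ F : H →L[ℂ] H,
    Module.rank ℂ (LinearMap.range F.toLinearMap) ≤ (n : Cardinal) ∧ c = ‖T - F‖}

/-- `tr(φ(|T|)) = Σ_n φ(s_n(T))`. -/
noncomputable def orliczSum (φ : OrliczFunction) (T : H →L[ℂ] H) : ℝ :=
  ∑' n : ℕ, φ.toFun (sValue T n)

/-- Membership in the noncommutative Orlicz sequence space `S_φ(H)`:
`T` is compact and `Σ_n φ(λ s_n(T)) < ∞` for some `λ > 0`. -/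
def MemS (φ : OrliczFunction) (T : H →L[ℂ] H) : Prop :=
  IsCompactOperator (⇑T) ∧
    ∃ l : ℝ, 0 < l ∧ Summable fun n : ℕ => φ.toFun (l * sValue T n)

/-- The Luxemburg norm `‖T‖_(φ) = inf {λ > 0 : Σ_n φ(s_n(T)/λ) ≤ 1}`. -/
noncomputable def luxNorm (φ : OrliczFunction) (T : H →L[ℂ] H) : ℝ :=
  sInf {l : ℝ | 0 < l ∧ (Summable fun n : ℕ => φ.toFun (sValue T n / l)) ∧
    ∑' n : ℕ, φ.toFun (sValue T n / l) ≤ 1}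

/-- The Orlicz norm `‖T‖_φ = sup {tr |TB| : tr(ψ(B)) ≤ 1}`, expressed through the
complementary function `ψ` of `φ` (here `tr|TB| = Σ_n s_n(TB)`). -/
noncomputable def orlNormVia (ψ : OrliczFunction) (T : H →L[ℂ] H) : ℝ :=
  sSup {c : ℝ | ∃ B : H →L[ℂ] H, IsCompactOperator (⇑B) ∧
    (Summable fun n : ℕ => ψ.toFun (sValue B n)) ∧
    (∑' n : ℕ, ψ.toFun (sValue B n)) ≤ 1 ∧ c = ∑' n : ℕ, sValue (T ∘L B) n}

/-- The norm `‖T‖_((φ),p) = (‖T₁‖_(φ₁)^p + ‖T₂‖_(φ₂)^p)^(1/p)` on 2-tuples. -/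
noncomputable def luxNorm2 (φ₁ φ₂ : OrliczFunction) (p : ℝ) (T₁ T₂ : H →L[ℂ] H) : ℝ :=
  (luxNorm φ₁ T₁ ^ p + luxNorm φ₂ T₂ ^ p) ^ (1 / p)

/-- The Orlicz-type norm `‖T‖_(φ,p) = (‖T₁‖_φ₁^p + ‖T₂‖_φ₂^p)^(1/p)` on 2-tuples,
where the Orlicz norms are computed via the complementary functions `ψ₁, ψ₂`. -/
noncomputable def orlNorm2 (ψ₁ ψ₂ : OrliczFunction) (p : ℝ) (T₁ T₂ : H →L[ℂ] H) : ℝ :=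
  (orlNormVia ψ₁ T₁ ^ p + orlNormVia ψ₂ T₂ ^ p) ^ (1 / p)

/-- 2-tuple Luxemburg norm for an exponent `r ∈ [1, ∞]`. -/
noncomputable def luxNorm2E (φ₁ φ₂ : OrliczFunction) (r : ℝ≥0∞) (T₁ T₂ : H →L[ℂ] H) : ℝ :=
  if r = ⊤ then max (luxNorm φ₁ T₁) (luxNorm φ₂ T₂)
  else (luxNorm φ₁ T₁ ^ r.toReal + luxNorm φ₂ T₂ ^ r.toReal) ^ (1 / r.toReal)

/-- The trace of an operator, computed along a Hilbert basis. -/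
noncomputable def traceAlong {ι : Type} (b : HilbertBasis ι ℂ H) (T : H →L[ℂ] H) : ℂ :=
  ∑' i : ι, ⟪b i, T (b i)⟫_ℂ

/-- The Schatten `p`-norm `‖T‖_p = (Σ_n s_n(T)^p)^(1/p)`. -/
noncomputable def schattenNorm (p : ℝ) (T : H →L[ℂ] H) : ℝ :=
  (∑' n : ℕ, sValue T n ^ p) ^ (1 / p)

/-- Membership in the Schatten class `S_p(H)`. -/
def MemSp (p : ℝ) (T : H →L[ℂ] H) : Prop :=
  IsCompactOperator (⇑T) ∧ Summable fun n : ℕ => sValue T n ^ p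

/-- The nonsquare constant `J` of the noncommutative Orlicz space `S_φ(H)`
(with the Luxemburg norm). -/
noncomputable def JOrlicz (φ : OrliczFunction) : ℝ :=
  sSup {c : ℝ | ∃ T B : H →L[ℂ] H, MemS φ T ∧ MemS φ B ∧
    luxNorm φ T = 1 ∧ luxNorm φ B = 1 ∧
    c = min (luxNorm φ (T + B)) (luxNorm φ (T - B))}

/-- The von Neumann–Jordan constant of `S_φ(H)` (with the Luxemburg norm): the smallest
`c > 0` such that `1/c ≤ (‖x+y‖² + ‖x−y‖²)/(2(‖x‖² + ‖y‖²)) ≤ c` for all `x, y` in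
`S_φ(H)` not both zero. -/
noncomputable def cNJOrlicz (φ : OrliczFunction) : ℝ :=
  sInf {c : ℝ | 0 < c ∧ ∀ T B : H →L[ℂ] H, MemS φ T → MemS φ B → ¬(T = 0 ∧ B = 0) →
    1 / c ≤ (luxNorm φ (T + B) ^ 2 + luxNorm φ (T - B) ^ 2) /
        (2 * (luxNorm φ T ^ 2 + luxNorm φ B ^ 2)) ∧
      (luxNorm φ (T + B) ^ 2 + luxNorm φ (T - B) ^ 2) /
        (2 * (luxNorm φ T ^ 2 + luxNorm φ B ^ 2)) ≤ c}

/-- The von Neumann–Jordan constant of the Schatten class `S_p(H)`. -/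
noncomputable def cNJSchatten (p : ℝ) : ℝ :=
  sInf {c : ℝ | 0 < c ∧ ∀ T B : H →L[ℂ] H, MemSp p T → MemSp p B → ¬(T = 0 ∧ B = 0) →
    1 / c ≤ (schattenNorm p (T + B) ^ 2 + schattenNorm p (T - B) ^ 2) /
        (2 * (schattenNorm p T ^ 2 + schattenNorm p B ^ 2)) ∧
      (schattenNorm p (T + B) ^ 2 + schattenNorm p (T - B) ^ 2) /
        (2 * (schattenNorm p T ^ 2 + schattenNorm p B ^ 2)) ≤ c}

/-
Fix singular value decompositions of finitely many finite-rank operators `T i` and of their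
combinations `∑ i, W b i • T i`, where `W` is a scalar matrix.  The singular values of the latter
are obtained from those of the `T i` by a matrix whose entries are the `W b i` times Hilbert–Schmidt
inner products of rank-one operators `⟪h, ·⟫ g`.  Bessel's inequality bounds this matrix from `ℓ¹`
to `ℓ^∞(ℓ¹)` by the largest entry of `W`, and from `ℓ²` to `ℓ²` by the norm of `W` on `ℓ²`.
Hadamard's three lines theorem interpolates between the two and bounds it from `ℓᵖ` to `ℓ^q(ℓᵖ)`.
Compressing by finite-rank projections extends the bound to the whole Schatten class, and
Clarkson's inequality is the case where `W` has rows `(1, 1)` and `(1, -1)`, for which the two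
bounds are `1` and `√2`.
-/

open scoped ComplexConjugate Matrix

/-- The power `sgn(c) |c| ^ w` of a complex number, as an entire function of the exponent `w`.
At `c = 0` it vanishes identically, through `0 / 0 = 0`. -/
noncomputable def phasePow (c w : ℂ) : ℂ :=
  c / ‖c‖ * Complex.exp (Real.log ‖c‖ * w)

theorem phasePow_one (c : ℂ) : phasePow c 1 = c := by
  rcases eq_or_ne c 0 with rfl | hc
  · simp [phasePow]
  · rw [phasePow, mul_one, ← Complex.ofReal_exp, Real.exp_log (norm_pos_iff.mpr hc)]
    exact div_mul_cancel₀ c (by simpa using hc)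

theorem differentiable_phasePow_comp (c : ℂ) {f : ℂ → ℂ} (hf : Differentiable ℂ f) :
    Differentiable ℂ fun z => phasePow c (f z) := by
  unfold phasePow
  fun_prop

theorem norm_phasePow_le (c w : ℂ) : ‖phasePow c w‖ ≤ ‖c‖ ^ w.re := by
  rcases eq_or_ne c 0 with rfl | hc
  · simp only [phasePow, zero_div, zero_mul, norm_zero]
    positivity
  · have hc' : ‖c‖ ≠ 0 := norm_ne_zero_iff.mpr hc
    rw [phasePow, norm_mul, norm_div, Complex.norm_real, norm_norm, div_self hc', one_mul,
      Complex.norm_exp, Complex.re_ofReal_mul, Real.rpow_def_of_pos (norm_pos_iff.mpr hc)]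

theorem phasePow_conj_mul_self (c : ℂ) {r : ℝ} (hr : r + 1 ≠ 0) :
    phasePow (conj c) r * c = (‖c‖ ^ (r + 1) : ℝ) := by
  rcases eq_or_ne c 0 with rfl | hc
  · simp [Real.zero_rpow hr]
  · have hc' : 0 < ‖c‖ := norm_pos_iff.mpr hc
    have hcC : (‖c‖ : ℂ) ≠ 0 := by exact_mod_cast hc'.ne'
    have hexp : Complex.exp (Real.log ‖c‖ * r) = (‖c‖ ^ r : ℝ) := by
      rw [Real.rpow_def_of_pos hc', Complex.ofReal_exp, Complex.ofReal_mul]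
    rw [phasePow, Complex.norm_conj, hexp, Real.rpow_add_one hc'.ne', Complex.ofReal_mul,
      div_mul_eq_mul_div, div_mul_eq_mul_div, mul_right_comm, Complex.conj_mul']
    field_simp

theorem phasePow_ofReal_mul_self {x : ℝ} (hx : 0 ≤ x) {r : ℝ} (hr : r + 1 ≠ 0) :
    phasePow x r * x = (x ^ (r + 1) : ℝ) := by
  simpa [abs_of_nonneg hx] using phasePow_conj_mul_self (x : ℂ) hr

theorem rpow_le_one_add_rpow {x s t : ℝ} (hx : 0 ≤ x) (hs : 0 ≤ s) (hst : s ≤ t) :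
    x ^ s ≤ (1 + x) ^ t :=
  (Real.rpow_le_rpow hx (le_add_of_nonneg_left zero_le_one) hs).trans
    (Real.rpow_le_rpow_of_exponent_le (le_add_of_nonneg_right hx) hst)

section MixedNorm

variable {β ι : Type*} {κ : β → Type*} [∀ b, Fintype (κ b)] {C₀ C₁ p q : ℝ}

/-- The analytic family through a vector `a` (attained at `z = 2 / q`) along which Riesz–Thorin
interpolation moves the input of a matrix from `ℓ¹` (at `re z = 0`) to `ℓ²` (at `re z = 1`). -/
noncomputable def inputFamily (p : ℝ) (a : ι → ℂ) (z : ℂ) (j : ι) : ℂ :=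
  phasePow (a j) (p * (1 - z / 2))

/-- The `p`-th power of the `ℓᵖ`-norm of the block `b` of the vector `c`. -/
noncomputable def blockMass (p : ℝ) (c : (b : β) × κ b → ℂ) (b : β) : ℝ :=
  ∑ k, ‖c ⟨b, k⟩‖ ^ p

/-- The analytic family of test vectors against which Riesz–Thorin interpolation pairs the output
`c`, moving from `ℓ¹(ℓ^∞)` (at `re z = 0`) to `ℓ²` (at `re z = 1`).  At `z = 2 / q` it norms `c` in
`ℓ^q(ℓᵖ)`. -/
noncomputable def dualFamily (p q : ℝ) (c : (b : β) × κ b → ℂ) (z : ℂ) (s : (b : β) × κ b) : ℂ :=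
  phasePow (blockMass p c s.1) (q * (1 - z / 2) - 1) * phasePow (conj (c s)) (p / 2 * z)

theorem differentiable_inputFamily (p : ℝ) (a : ι → ℂ) (j : ι) :
    Differentiable ℂ fun z => inputFamily p a z j :=
  differentiable_phasePow_comp _ (by fun_prop)

theorem differentiable_dualFamily (p q : ℝ) (c : (b : β) × κ b → ℂ) (s : (b : β) × κ b) :
    Differentiable ℂ fun z => dualFamily p q c z s :=
  (differentiable_phasePow_comp _ (by fun_prop)).mul (differentiable_phasePow_comp _ (by fun_prop))

theorem norm_inputFamily_le (p : ℝ) (a : ι → ℂ) (z : ℂ) (j : ι) :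
    ‖inputFamily p a z j‖ ≤ ‖a j‖ ^ (p * (1 - z.re / 2)) := by
  refine (norm_phasePow_le _ _).trans_eq ?_
  simp

theorem blockMass_nonneg (p : ℝ) (c : (b : β) × κ b → ℂ) (b : β) : 0 ≤ blockMass p c b :=
  Finset.sum_nonneg fun _ _ => by positivity

theorem norm_rpow_le_blockMass (p : ℝ) (c : (b : β) × κ b → ℂ) (b : β) (k : κ b) :
    ‖c ⟨b, k⟩‖ ^ p ≤ blockMass p c b :=
  Finset.single_le_sum (f := fun k => ‖c ⟨b, k⟩‖ ^ p) (fun _ _ => by positivity)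
    (Finset.mem_univ k)

theorem norm_dualFamily_le (p q : ℝ) (c : (b : β) × κ b → ℂ) (z : ℂ) (b : β) (k : κ b) :
    ‖dualFamily p q c z ⟨b, k⟩‖ ≤
      blockMass p c b ^ (q * (1 - z.re / 2) - 1) * ‖c ⟨b, k⟩‖ ^ (p / 2 * z.re) := by
  rw [dualFamily, norm_mul]
  have h₁ := norm_phasePow_le (blockMass p c b) (q * (1 - z / 2) - 1)
  have h₂ := norm_phasePow_le (conj (c ⟨b, k⟩)) (p / 2 * z)
  rw [Complex.norm_real, Real.norm_of_nonneg (blockMass_nonneg p c b)] at h₁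
  rw [Complex.norm_conj] at h₂
  refine (mul_le_mul h₁ h₂ (norm_nonneg _)
    (Real.rpow_nonneg (blockMass_nonneg p c b) _)).trans_eq ?_
  norm_num

theorem norm_dualFamily_le_blockMass (c : (b : β) × κ b → ℂ) {z : ℂ}
    (hz : 0 ≤ z.re) (b : β) (k : κ b) :
    ‖dualFamily p q c z ⟨b, k⟩‖ ≤
      blockMass p c b ^ (q * (1 - z.re / 2) - 1) * blockMass p c b ^ (z.re / 2) := by
  have hσ := blockMass_nonneg p c b
  refine (norm_dualFamily_le p q c z b k).trans ?_
  rw [div_mul_eq_mul_div, mul_div_assoc, Real.rpow_mul (norm_nonneg _)]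
  gcongr
  exact norm_rpow_le_blockMass p c b k

theorem inputFamily_two_div (hpq : p.HolderConjugate q) (a : ι → ℂ) :
    inputFamily p a (2 / q) = a := by
  have hexp : (p : ℂ) * (1 - 2 / q / 2) = 1 := by
    have h : p * (1 - 2 / q / 2) = 1 := by
      rw [div_right_comm, div_self two_ne_zero, one_div, hpq.symm.one_sub_inv,
        mul_inv_cancel₀ hpq.ne_zero]
    exact_mod_cast h
  ext j
  rw [inputFamily, hexp, phasePow_one]

variable [Fintype β] [Fintype ι]

theorem norm_dotProduct_mulVec_le_of_sum_norm_le {M : Matrix ((b : β) × κ b) ι ℂ}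
    (hM : ∀ b j, ∑ k, ‖M ⟨b, k⟩ j‖ ≤ C₀)
    {x : ι → ℂ} {y : (b : β) × κ b → ℂ} {X : ι → ℝ} {Y : β → ℝ} (hx : ∀ j, ‖x j‖ ≤ X j)
    (hy : ∀ b k, ‖y ⟨b, k⟩‖ ≤ Y b) (hY : ∀ b, 0 ≤ Y b) :
    ‖y ⬝ᵥ M *ᵥ x‖ ≤ C₀ * (∑ j, X j) * ∑ b, Y b := by
  calc ‖y ⬝ᵥ M *ᵥ x‖
      ≤ ∑ b, ∑ k, ‖y ⟨b, k⟩‖ * ∑ j, ‖M ⟨b, k⟩ j‖ * ‖x j‖ := by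
        rw [dotProduct, Fintype.sum_sigma]
        refine norm_sum_le_of_le _ fun b _ => norm_sum_le_of_le _ fun k _ => ?_
        rw [norm_mul]
        gcongr
        exact norm_sum_le_of_le _ fun j _ => (norm_mul _ _).le
    _ ≤ ∑ b, ∑ k, Y b * ∑ j, ‖M ⟨b, k⟩ j‖ * X j := by
        gcongr with b _ k _ j
        exacts [hY b, hy b k, hx j]
    _ = ∑ b, Y b * ∑ j, (∑ k, ‖M ⟨b, k⟩ j‖) * X j := by
        simp_rw [← Finset.mul_sum, Finset.sum_mul]
        exact Finset.sum_congr rfl fun b _ => by rw [Finset.sum_comm]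
    _ ≤ ∑ b, Y b * ∑ j, C₀ * X j := by
        gcongr with b _ j
        exacts [hY b, (norm_nonneg _).trans (hx j), hM b j]
    _ = C₀ * (∑ j, X j) * ∑ b, Y b := by rw [← Finset.mul_sum, ← Finset.sum_mul, mul_comm]

theorem norm_dotProduct_mulVec_le_of_sum_sq_le {σ : Type*} [Fintype σ] {M : Matrix σ ι ℂ}
    (hC₁ : 0 ≤ C₁) (hM : ∀ x, ∑ s, ‖(M *ᵥ x) s‖ ^ 2 ≤ C₁ ^ 2 * ∑ j, ‖x j‖ ^ 2)
    (x : ι → ℂ) (y : σ → ℂ) :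
    ‖y ⬝ᵥ M *ᵥ x‖ ≤ C₁ * √(∑ j, ‖x j‖ ^ 2) * √(∑ s, ‖y s‖ ^ 2) := by
  calc ‖y ⬝ᵥ M *ᵥ x‖ ≤ ∑ s, ‖y s‖ * ‖(M *ᵥ x) s‖ :=
        norm_sum_le_of_le _ fun s _ => (norm_mul _ _).le
    _ ≤ √(∑ s, ‖y s‖ ^ 2) * √(∑ s, ‖(M *ᵥ x) s‖ ^ 2) := Real.sum_mul_le_sqrt_mul_sqrt _ _ _
    _ ≤ √(∑ s, ‖y s‖ ^ 2) * √(C₁ ^ 2 * ∑ j, ‖x j‖ ^ 2) := by gcongr; exact hM x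
    _ = C₁ * √(∑ j, ‖x j‖ ^ 2) * √(∑ s, ‖y s‖ ^ 2) := by
        rw [Real.sqrt_mul (sq_nonneg C₁), Real.sqrt_sq hC₁]
        ring

theorem sum_norm_inputFamily_sq_le (a : ι → ℂ) {z : ℂ} (hz : z.re = 1) :
    ∑ j, ‖inputFamily p a z j‖ ^ 2 ≤ ∑ j, ‖a j‖ ^ p := by
  refine Finset.sum_le_sum fun j _ => ?_
  calc ‖inputFamily p a z j‖ ^ 2
      ≤ (‖a j‖ ^ (p * (1 - z.re / 2))) ^ 2 := by gcongr; exact norm_inputFamily_le p a z j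
    _ = ‖a j‖ ^ p := by
        rw [← Real.rpow_mul_natCast (norm_nonneg _), hz]
        ring_nf

theorem sum_norm_dualFamily_sq_le (hq : 1 < q) (c : (b : β) × κ b → ℂ) {z : ℂ} (hz : z.re = 1) :
    ∑ s, ‖dualFamily p q c z s‖ ^ 2 ≤ ∑ b, blockMass p c b ^ (q - 1) := by
  rw [Fintype.sum_sigma]
  refine Finset.sum_le_sum fun b _ => ?_
  have hσ := blockMass_nonneg p c b
  calc ∑ k, ‖dualFamily p q c z ⟨b, k⟩‖ ^ 2
      ≤ ∑ k, (blockMass p c b ^ (q * (1 - z.re / 2) - 1) * ‖c ⟨b, k⟩‖ ^ (p / 2 * z.re)) ^ 2 := by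
        gcongr with k
        exact norm_dualFamily_le p q c z b k
    _ = ∑ k, blockMass p c b ^ (q - 2) * ‖c ⟨b, k⟩‖ ^ p := by
        refine Finset.sum_congr rfl fun k _ => ?_
        rw [mul_pow, ← Real.rpow_mul_natCast hσ, ← Real.rpow_mul_natCast (norm_nonneg _), hz]
        ring_nf
    _ = blockMass p c b ^ (q - 1) := by
        rw [← Finset.mul_sum, ← blockMass, ← Real.rpow_add_one' hσ (by linarith)]
        ring_nf

theorem dualFamily_two_div_dotProduct (hpq : p.HolderConjugate q) (c : (b : β) × κ b → ℂ) :
    dualFamily p q c (2 / q) ⬝ᵥ c = (∑ b, blockMass p c b ^ (q - 1) : ℝ) := by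
  have hq : (q : ℂ) ≠ 0 := by exact_mod_cast hpq.symm.ne_zero
  have hexp₁ : (q : ℂ) * (1 - 2 / q / 2) - 1 = (q - 2 : ℝ) := by
    push_cast
    field_simp
    ring
  have hexp₂ : (p : ℂ) / 2 * (2 / q) = (p - 1 : ℝ) := by
    rw [← hpq.div_conj_eq_sub_one]
    push_cast
    field_simp
  have hblock : ∀ b, ∑ k, phasePow (conj (c ⟨b, k⟩)) (p - 1 : ℝ) * c ⟨b, k⟩ = blockMass p c b :=
    fun b => by
      rw [blockMass, Complex.ofReal_sum]
      refine Finset.sum_congr rfl fun k _ => ?_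
      rw [phasePow_conj_mul_self _ (by simpa using hpq.ne_zero), sub_add_cancel]
  rw [dotProduct, Fintype.sum_sigma, Complex.ofReal_sum]
  refine Finset.sum_congr rfl fun b _ => ?_
  simp_rw [dualFamily, hexp₁, hexp₂, mul_assoc]
  have hq1 : q - 2 + 1 = q - 1 := by ring
  rw [← Finset.mul_sum, hblock, phasePow_ofReal_mul_self (blockMass_nonneg p c b)
    (hq1 ▸ hpq.symm.sub_one_ne_zero), hq1]

theorem norm_dualFamily_dotProduct_le_left {M : Matrix ((b : β) × κ b) ι ℂ}
    (hM : ∀ b j, ∑ k, ‖M ⟨b, k⟩ j‖ ≤ C₀) (a : ι → ℂ) (c : (b : β) × κ b → ℂ)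
    {z : ℂ} (hz : z.re = 0) :
    ‖dualFamily p q c z ⬝ᵥ M *ᵥ inputFamily p a z‖ ≤
      C₀ * (∑ j, ‖a j‖ ^ p) * ∑ b, blockMass p c b ^ (q - 1) := by
  refine norm_dotProduct_mulVec_le_of_sum_norm_le hM (fun j => ?_) (fun b k => ?_)
    fun b => Real.rpow_nonneg (blockMass_nonneg p c b) _
  · simpa [hz] using norm_inputFamily_le p a z j
  · simpa [hz] using norm_dualFamily_le_blockMass (q := q) c hz.ge b k

theorem norm_dualFamily_dotProduct_le_right {M : Matrix ((b : β) × κ b) ι ℂ}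
    (hC₁ : 0 ≤ C₁) (hM : ∀ x, ∑ s, ‖(M *ᵥ x) s‖ ^ 2 ≤ C₁ ^ 2 * ∑ j, ‖x j‖ ^ 2) (hq : 1 < q)
    (a : ι → ℂ) (c : (b : β) × κ b → ℂ) {z : ℂ} (hz : z.re = 1) :
    ‖dualFamily p q c z ⬝ᵥ M *ᵥ inputFamily p a z‖ ≤
      C₁ * √(∑ j, ‖a j‖ ^ p) * √(∑ b, blockMass p c b ^ (q - 1)) := by
  refine (norm_dotProduct_mulVec_le_of_sum_sq_le hC₁ hM _ _).trans ?_
  gcongr C₁ * √?_ * √?_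
  exacts [sum_norm_inputFamily_sq_le a hz, sum_norm_dualFamily_sq_le hq c hz]

theorem bddAbove_norm_dualFamily_dotProduct {M : Matrix ((b : β) × κ b) ι ℂ}
    (hM : ∀ b j, ∑ k, ‖M ⟨b, k⟩ j‖ ≤ C₀) (hp : 0 ≤ p) (hq : 2 ≤ q) (a : ι → ℂ)
    (c : (b : β) × κ b → ℂ) :
    BddAbove ((norm ∘ fun z => dualFamily p q c z ⬝ᵥ M *ᵥ inputFamily p a z) ''
      Complex.HadamardThreeLines.verticalClosedStrip 0 1) := by
  refine ⟨C₀ * (∑ j, (1 + ‖a j‖) ^ p) *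
    ∑ b, (1 + blockMass p c b) ^ q * (1 + blockMass p c b) ^ (1 : ℝ), ?_⟩
  rintro _ ⟨z, ⟨hz₀, hz₁⟩, rfl⟩
  have hσ := blockMass_nonneg p c
  refine norm_dotProduct_mulVec_le_of_sum_norm_le hM (fun j => ?_) (fun b k => ?_)
    fun b => by have := hσ b; positivity
  · exact (norm_inputFamily_le p a z j).trans
      (rpow_le_one_add_rpow (norm_nonneg _) (by nlinarith) (by nlinarith))
  · have hqz₀ : 0 ≤ q * z.re := by positivity
    have hqz₁ : q * z.re ≤ q := mul_le_of_le_one_right (by linarith) hz₁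
    exact (norm_dualFamily_le_blockMass c hz₀ b k).trans
      (mul_le_mul (rpow_le_one_add_rpow (hσ b) (by linarith) (by linarith))
        (rpow_le_one_add_rpow (hσ b) (by linarith) (by linarith)) (Real.rpow_nonneg (hσ b) _)
        (by have := hσ b; positivity))

theorem differentiable_dualFamily_dotProduct (p q : ℝ) (M : Matrix ((b : β) × κ b) ι ℂ)
    (a : ι → ℂ) (c : (b : β) × κ b → ℂ) :
    Differentiable ℂ fun z => dualFamily p q c z ⬝ᵥ M *ᵥ inputFamily p a z := by
  have h₁ := differentiable_inputFamily p a
  have h₂ := differentiable_dualFamily p q c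
  simp only [dotProduct, Matrix.mulVec]
  fun_prop

theorem sum_blockMass_mulVec_le {M : Matrix ((b : β) × κ b) ι ℂ} (hC₀ : 0 ≤ C₀) (hC₁ : 0 ≤ C₁)
    (hcol : ∀ b j, ∑ k, ‖M ⟨b, k⟩ j‖ ≤ C₀)
    (hM : ∀ x, ∑ s, ‖(M *ᵥ x) s‖ ^ 2 ≤ C₁ ^ 2 * ∑ j, ‖x j‖ ^ 2)
    (hpq : p.HolderConjugate q) (hp : p ≤ 2) (a : ι → ℂ) :
    ∑ b, blockMass p (M *ᵥ a) b ^ (q - 1) ≤ C₀ ^ (1 - 2 / q) * C₁ ^ (2 / q) *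
      ((∑ j, ‖a j‖ ^ p) * ∑ b, blockMass p (M *ᵥ a) b ^ (q - 1)) ^ (1 / p) := by
  set P := ∑ j, ‖a j‖ ^ p
  set Q := ∑ b, blockMass p (M *ᵥ a) b ^ (q - 1)
  have hP : 0 ≤ P := by positivity
  have hQ : 0 ≤ Q := Finset.sum_nonneg fun b _ => Real.rpow_nonneg (blockMass_nonneg _ _ b) _
  have hq : 2 ≤ q := by nlinarith [hpq.mul_eq_add, hpq.lt]
  have hθ : 2 / q ∈ Set.Icc (0 : ℝ) 1 := ⟨by positivity, (div_le_one (by linarith)).mpr hq⟩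
  have hre : (2 / q : ℂ).re = 2 / q := by
    rw [← Complex.ofReal_ofNat, ← Complex.ofReal_div, Complex.ofReal_re]
  have hthree := Complex.HadamardThreeLines.norm_le_interp_of_mem_verticalClosedStrip₀₁'
    (fun z => dualFamily p q (M *ᵥ a) z ⬝ᵥ M *ᵥ inputFamily p a z) (z := 2 / q)
    (by rwa [Complex.HadamardThreeLines.verticalClosedStrip, Set.mem_preimage, hre])
    (differentiable_dualFamily_dotProduct p q M a _).diffContOnCl
    (bddAbove_norm_dualFamily_dotProduct hcol hpq.nonneg hq a _)
    (fun z hz => norm_dualFamily_dotProduct_le_left hcol a _ hz)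
    (fun z hz => norm_dualFamily_dotProduct_le_right hC₁ hM hpq.symm.lt a _ hz)
  rw [inputFamily_two_div hpq, dualFamily_two_div_dotProduct hpq, Complex.norm_real,
    Real.norm_of_nonneg hQ, hre] at hthree
  have hexp : 1 - 2 / q + 2 / q * (1 / 2) = 1 / p := by
    rw [one_div p, ← hpq.symm.one_sub_inv]
    ring
  calc Q ≤ (C₀ * P * Q) ^ (1 - 2 / q) * (C₁ * √P * √Q) ^ (2 / q) := hthree
    _ = C₀ ^ (1 - 2 / q) * C₁ ^ (2 / q) * ((P * Q) ^ (1 - 2 / q) * √(P * Q) ^ (2 / q)) := by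
        rw [Real.sqrt_mul hP, mul_assoc C₀, mul_assoc C₁, Real.mul_rpow hC₀ (by positivity),
          Real.mul_rpow hC₁ (by positivity)]
        ring
    _ = C₀ ^ (1 - 2 / q) * C₁ ^ (2 / q) * (P * Q) ^ (1 / p) := by
        rw [Real.sqrt_eq_rpow, ← Real.rpow_mul (by positivity), mul_comm (1 / 2 : ℝ),
          ← Real.rpow_add_of_nonneg (by positivity) (sub_nonneg.mpr hθ.2)
            (mul_nonneg hθ.1 (by norm_num)), hexp]

theorem mixedNorm_mulVec_le {M : Matrix ((b : β) × κ b) ι ℂ} (hC₀ : 0 ≤ C₀) (hC₁ : 0 ≤ C₁)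
    (hcol : ∀ b j, ∑ k, ‖M ⟨b, k⟩ j‖ ≤ C₀)
    (hM : ∀ x, ∑ s, ‖(M *ᵥ x) s‖ ^ 2 ≤ C₁ ^ 2 * ∑ j, ‖x j‖ ^ 2)
    (hpq : p.HolderConjugate q) (hp : p ≤ 2) (a : ι → ℂ) :
    (∑ b, (∑ k, ‖(M *ᵥ a) ⟨b, k⟩‖ ^ p) ^ (q / p)) ^ (1 / q) ≤
      C₀ ^ (1 - 2 / q) * C₁ ^ (2 / q) * (∑ j, ‖a j‖ ^ p) ^ (1 / p) := by
  have hle := sum_blockMass_mulVec_le hC₀ hC₁ hcol hM hpq hp a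
  change (∑ b, blockMass p (M *ᵥ a) b ^ (q / p)) ^ (1 / q) ≤ _
  rw [hpq.symm.div_conj_eq_sub_one]
  set Q := ∑ b, blockMass p (M *ᵥ a) b ^ (q - 1)
  have hQ : 0 ≤ Q := Finset.sum_nonneg fun b _ => Real.rpow_nonneg (blockMass_nonneg _ _ b) _
  rcases hQ.eq_or_lt with hQ0 | hQ0
  · rw [← hQ0, Real.zero_rpow hpq.symm.one_div_ne_zero]
    positivity
  · refine le_of_mul_le_mul_right ?_ (Real.rpow_pos_of_pos hQ0 (1 / p))
    rw [← Real.rpow_add hQ0, add_comm, hpq.one_div_add_one_div, div_one, Real.rpow_one, mul_assoc,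
      ← Real.mul_rpow (by positivity) hQ]
    exact hle

end MixedNorm

section InnerProductSpace

variable {E : Type*} [NormedAddCommGroup E] [InnerProductSpace ℂ E] {β ι : Type*}

theorem norm_sum_smul_sq_of_orthonormal {u : ι → E} (hu : Orthonormal ℂ u) (c : ι → ℂ)
    (s : Finset ι) : ‖∑ j ∈ s, c j • u j‖ ^ 2 = ∑ j ∈ s, ‖c j‖ ^ 2 := by
  have h := hu.inner_sum c c s
  simp only [inner_self_eq_norm_sq_to_K, RCLike.conj_mul] at h
  exact_mod_cast h

theorem sum_norm_sum_smul_sq_le [Fintype β] [Fintype ι] {W : Matrix β ι ℂ} {C : ℝ}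
    (hW : ∀ x, ∑ b, ‖(W *ᵥ x) b‖ ^ 2 ≤ C ^ 2 * ∑ i, ‖x i‖ ^ 2) (x : ι → E) :
    ∑ b, ‖∑ i, W b i • x i‖ ^ 2 ≤ C ^ 2 * ∑ i, ‖x i‖ ^ 2 := by
  let S := Submodule.span ℂ (Set.range x)
  have : FiniteDimensional ℂ S := FiniteDimensional.span_of_finite ℂ (Set.finite_range x)
  let y : ι → S := fun i => ⟨x i, Submodule.subset_span ⟨i, rfl⟩⟩
  let e := stdOrthonormalBasis ℂ S
  have hcoord : ∀ b k, ⟪e k, ∑ i, W b i • y i⟫_ℂ = (W *ᵥ fun i => ⟪e k, y i⟫_ℂ) b := fun b k => by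
    simp only [inner_sum, inner_smul_right, Matrix.mulVec, dotProduct]
  calc ∑ b, ‖∑ i, W b i • x i‖ ^ 2 = ∑ b, ‖∑ i, W b i • y i‖ ^ 2 := by
        simp only [← Submodule.norm_coe, Submodule.coe_sum, Submodule.coe_smul, y]
    _ = ∑ k, ∑ b, ‖(W *ᵥ fun i => ⟪e k, y i⟫_ℂ) b‖ ^ 2 := by
        simp_rw [← e.sum_sq_norm_inner_right, hcoord]
        exact Finset.sum_comm
    _ ≤ ∑ k, C ^ 2 * ∑ i, ‖⟪e k, y i⟫_ℂ‖ ^ 2 := Finset.sum_le_sum fun k _ => hW _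
    _ = C ^ 2 * ∑ i, ‖y i‖ ^ 2 := by
        simp_rw [← e.sum_sq_norm_inner_right, ← Finset.mul_sum]
        rw [Finset.sum_comm]
    _ = C ^ 2 * ∑ i, ‖x i‖ ^ 2 := rfl

theorem sum_norm_inner_mul_inner_le_one [Fintype ι] {f e : ι → E} (hf : Orthonormal ℂ f)
    (he : Orthonormal ℂ e) {g h : E} (hg : ‖g‖ = 1) (hh : ‖h‖ = 1) :
    ∑ k, ‖⟪f k, g⟫_ℂ * ⟪h, e k⟫_ℂ‖ ≤ 1 := by
  calc ∑ k, ‖⟪f k, g⟫_ℂ * ⟪h, e k⟫_ℂ‖ = ∑ k, ‖⟪f k, g⟫_ℂ‖ * ‖⟪e k, h⟫_ℂ‖ := by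
        simp only [norm_mul, norm_inner_symm h]
    _ ≤ √(∑ k, ‖⟪f k, g⟫_ℂ‖ ^ 2) * √(∑ k, ‖⟪e k, h⟫_ℂ‖ ^ 2) :=
        Real.sum_mul_le_sqrt_mul_sqrt _ _ _
    _ ≤ √(‖g‖ ^ 2) * √(‖h‖ ^ 2) := by
        gcongr
        exacts [hf.sum_inner_products_le g, he.sum_inner_products_le h]
    _ = 1 := by simp [hg, hh]

open TensorProduct in
/-- The tensor `g ⊗ h̄` representing the rank-one operator `⟪h, ·⟫ g` in a Hilbert–Schmidt
space.  Conjugation of `h` is carried out on its coordinates in a Hilbert basis, which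
gives a linear model of the conjugate space. -/
noncomputable def hilbertSchmidtTensor {α : Type*} (b : HilbertBasis α ℂ E) (g h : E) :
    E ⊗[ℂ] lp (fun _ : α => ℂ) 2 :=
  g ⊗ₜ[ℂ] star (b.repr h)

theorem inner_hilbertSchmidtTensor {α : Type*} (b : HilbertBasis α ℂ E) (f e g h : E) :
    ⟪hilbertSchmidtTensor b f e, hilbertSchmidtTensor b g h⟫_ℂ = ⟪f, g⟫_ℂ * ⟪h, e⟫_ℂ := by
  have hstar : ⟪star (b.repr e), star (b.repr h)⟫_ℂ = ⟪h, e⟫_ℂ := by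
    rw [← b.repr.inner_map_map h e, lp.inner_eq_tsum, lp.inner_eq_tsum]
    exact tsum_congr fun i => by simp [mul_comm]
  rw [hilbertSchmidtTensor, hilbertSchmidtTensor, TensorProduct.inner_tmul, hstar]

theorem orthonormal_hilbertSchmidtTensor {α σ : Type*} (b : HilbertBasis α ℂ E) {g h : σ → E}
    (hg : Orthonormal ℂ g) (hh : Orthonormal ℂ h) :
    Orthonormal ℂ fun j => hilbertSchmidtTensor b (g j) (h j) := by
  classical
  rw [orthonormal_iff_ite]
  intro i j
  rw [inner_hilbertSchmidtTensor, orthonormal_iff_ite.mp hg i j, orthonormal_iff_ite.mp hh j i]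
  simp only [eq_comm, ite_mul_ite, mul_one, mul_zero]

section BlockMatrix

/-- The matrix of the block operator `W ⊗ 1` with respect to families of vectors `u'` (for the
output blocks) and `u` (for the input blocks). -/
noncomputable def blockMatrix {κ : β → Type*} {η : ι → Type*} (W : Matrix β ι ℂ)
    (u' : ∀ b, κ b → E) (u : ∀ i, η i → E) : Matrix ((b : β) × κ b) ((i : ι) × η i) ℂ :=
  .of fun s t => W s.1 t.1 * ⟪u' s.1 s.2, u t.1 t.2⟫_ℂ

variable {κ : β → Type*} {η : ι → Type*} {W : Matrix β ι ℂ} {u' : ∀ b, κ b → E}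
  {u : ∀ i, η i → E} {C C₀ C₁ p q : ℝ}

theorem blockMatrix_mulVec [Fintype ι] [∀ i, Fintype (η i)] (x : (i : ι) × η i → ℂ)
    (b : β) (k : κ b) :
    (blockMatrix W u' u *ᵥ x) ⟨b, k⟩ = ⟪u' b k, ∑ i, W b i • ∑ j, x ⟨i, j⟩ • u i j⟫_ℂ := by
  simp only [blockMatrix, Matrix.mulVec, dotProduct, Fintype.sum_sigma, inner_sum,
    inner_smul_right, Matrix.of_apply, Finset.mul_sum]
  exact Finset.sum_congr rfl fun i _ => Finset.sum_congr rfl fun j _ => by ring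

theorem sum_norm_blockMatrix_le {b : β} [Fintype (κ b)] (hW : ∀ b i, ‖W b i‖ ≤ C) (hC : 0 ≤ C)
    {t : (i : ι) × η i} (h : ∑ k, ‖⟪u' b k, u t.1 t.2⟫_ℂ‖ ≤ 1) :
    ∑ k, ‖blockMatrix W u' u ⟨b, k⟩ t‖ ≤ C := by
  simp only [blockMatrix, Matrix.of_apply, norm_mul, ← Finset.mul_sum]
  exact (mul_le_mul (hW b t.1) h (by positivity) hC).trans_eq (mul_one C)

variable [Fintype β] [Fintype ι] [∀ b, Fintype (κ b)] [∀ i, Fintype (η i)]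

theorem sum_norm_blockMatrix_mulVec_sq_le
    (hW : ∀ x, ∑ b, ‖(W *ᵥ x) b‖ ^ 2 ≤ C ^ 2 * ∑ i, ‖x i‖ ^ 2)
    (hu' : ∀ b, Orthonormal ℂ (u' b)) (hu : ∀ i, Orthonormal ℂ (u i)) (x : (i : ι) × η i → ℂ) :
    ∑ s, ‖(blockMatrix W u' u *ᵥ x) s‖ ^ 2 ≤ C ^ 2 * ∑ t, ‖x t‖ ^ 2 := by
  calc ∑ s, ‖(blockMatrix W u' u *ᵥ x) s‖ ^ 2
      = ∑ b, ∑ k, ‖⟪u' b k, ∑ i, W b i • ∑ j, x ⟨i, j⟩ • u i j⟫_ℂ‖ ^ 2 := by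
        simp only [Fintype.sum_sigma, blockMatrix_mulVec]
    _ ≤ ∑ b, ‖∑ i, W b i • ∑ j, x ⟨i, j⟩ • u i j‖ ^ 2 :=
        Finset.sum_le_sum fun b _ => (hu' b).sum_inner_products_le _
    _ ≤ C ^ 2 * ∑ i, ‖∑ j, x ⟨i, j⟩ • u i j‖ ^ 2 := sum_norm_sum_smul_sq_le hW _
    _ = C ^ 2 * ∑ t, ‖x t‖ ^ 2 := by
        simp only [Fintype.sum_sigma, norm_sum_smul_sq_of_orthonormal (hu _)]

theorem mixedNorm_inner_sum_smul_le (hC₀ : 0 ≤ C₀) (hC₁ : 0 ≤ C₁) (hW₀ : ∀ b i, ‖W b i‖ ≤ C₀)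
    (hW₁ : ∀ x, ∑ b, ‖(W *ᵥ x) b‖ ^ 2 ≤ C₁ ^ 2 * ∑ i, ‖x i‖ ^ 2)
    (hu' : ∀ b, Orthonormal ℂ (u' b)) (hu : ∀ i, Orthonormal ℂ (u i))
    (huu : ∀ b i j, ∑ k, ‖⟪u' b k, u i j⟫_ℂ‖ ≤ 1) (hpq : p.HolderConjugate q) (hp : p ≤ 2)
    (a : (i : ι) × η i → ℂ) :
    (∑ b, (∑ k, ‖⟪u' b k, ∑ i, W b i • ∑ j, a ⟨i, j⟩ • u i j⟫_ℂ‖ ^ p) ^ (q / p)) ^ (1 / q) ≤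
      C₀ ^ (1 - 2 / q) * C₁ ^ (2 / q) * (∑ i, ∑ j, ‖a ⟨i, j⟩‖ ^ p) ^ (1 / p) := by
  have h := mixedNorm_mulVec_le hC₀ hC₁
    (fun b t => sum_norm_blockMatrix_le hW₀ hC₀ (huu b t.1 t.2))
    (sum_norm_blockMatrix_mulVec_sq_le hW₁ hu' hu) hpq hp a
  simpa only [blockMatrix_mulVec, Fintype.sum_sigma] using h

end BlockMatrix

end InnerProductSpace

open InnerProductSpace (rankOne)

section SValue

variable {E : Type} [NormedAddCommGroup E] [InnerProductSpace ℂ E]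

theorem sValue_le_norm_sub {T F : E →L[ℂ] E} {n : ℕ} (hF : F.toLinearMap.rank ≤ n) :
    sValue T n ≤ ‖T - F‖ :=
  csInf_le ⟨0, by rintro _ ⟨F, -, rfl⟩; exact norm_nonneg _⟩ ⟨F, hF, rfl⟩

theorem le_sValue {T : E →L[ℂ] E} {n : ℕ} {c : ℝ}
    (h : ∀ F : E →L[ℂ] E, F.toLinearMap.rank ≤ n → c ≤ ‖T - F‖) : c ≤ sValue T n := by
  refine le_csInf ⟨_, 0, ?_, rfl⟩ ?_
  · simp
  · rintro _ ⟨F, hF, rfl⟩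
    exact h F hF

theorem exists_norm_sub_lt_of_sValue_lt {T : E →L[ℂ] E} {n : ℕ} {ε : ℝ}
    (h : sValue T n < ε) :
    ∃ F : E →L[ℂ] E, F.toLinearMap.rank ≤ n ∧ ‖T - F‖ < ε := by
  contrapose! h
  exact le_sValue h

theorem sValue_nonneg (T : E →L[ℂ] E) (n : ℕ) : 0 ≤ sValue T n :=
  le_sValue fun _ _ => norm_nonneg _

theorem sValue_le_norm (T : E →L[ℂ] E) (n : ℕ) : sValue T n ≤ ‖T‖ := by
  simpa using sValue_le_norm_sub (T := T) (F := 0) (n := n) (by simp)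

theorem antitone_sValue (T : E →L[ℂ] E) : Antitone (sValue T) := fun _ _ hmn =>
  le_sValue fun _ hF => sValue_le_norm_sub (hF.trans (by exact_mod_cast hmn))

theorem sValue_add_le (S T : E →L[ℂ] E) (m n : ℕ) :
    sValue (S + T) (m + n) ≤ sValue S m + sValue T n := by
  rw [← sub_le_iff_le_add]
  refine le_sValue fun F hF => ?_
  rw [sub_le_comm]
  refine le_sValue fun G hG => ?_
  have hFG : (F + G).toLinearMap.rank ≤ (m + n : ℕ) := by
    rw [Nat.cast_add]
    exact (LinearMap.rank_add_le _ _).trans (add_le_add hF hG)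
  calc sValue (S + T) (m + n) - ‖S - F‖ ≤ ‖S + T - (F + G)‖ - ‖S - F‖ := by
        gcongr
        exact sValue_le_norm_sub hFG
    _ ≤ ‖T - G‖ := by
        rw [add_sub_add_comm, sub_le_iff_le_add']
        exact norm_add_le _ _

theorem sValue_smul_le (c : ℂ) (T : E →L[ℂ] E) (n : ℕ) :
    sValue (c • T) n ≤ ‖c‖ * sValue T n := by
  rcases eq_or_ne c 0 with rfl | hc
  · simpa using sValue_le_norm (0 : E →L[ℂ] E) n
  · have hc' : 0 < ‖c‖ := norm_pos_iff.mpr hc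
    rw [← div_le_iff₀' hc']
    refine le_sValue fun F hF => ?_
    have hcF : (c • F).toLinearMap.rank ≤ n := by
      refine (Submodule.rank_mono ?_).trans hF
      rintro _ ⟨x, rfl⟩
      exact ⟨c • x, map_smul F c x⟩
    rw [div_le_iff₀' hc', ← norm_smul, smul_sub]
    exact sValue_le_norm_sub hcF

theorem sValue_comp_le {P : E →L[ℂ] E} (hP : ‖P‖ ≤ 1) (T : E →L[ℂ] E) (n : ℕ) :
    sValue (P ∘L T) n ≤ sValue T n := by
  refine le_sValue fun F hF => ?_
  have hPF : (P ∘L F).toLinearMap.rank ≤ n :=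
    (LinearMap.rank_comp_le_right F.toLinearMap P.toLinearMap).trans hF
  calc sValue (P ∘L T) n ≤ ‖P ∘L T - P ∘L F‖ := sValue_le_norm_sub hPF
    _ ≤ ‖P‖ * ‖T - F‖ := by
        rw [← ContinuousLinearMap.comp_sub]
        exact ContinuousLinearMap.opNorm_comp_le _ _
    _ ≤ ‖T - F‖ := mul_le_of_le_one_left (norm_nonneg _) hP

theorem continuous_sValue (n : ℕ) : Continuous fun T : E →L[ℂ] E => sValue T n := by
  refine (LipschitzWith.of_le_add fun S T => ?_).continuous
  calc sValue S n = sValue (T + (S - T)) (n + 0) := by rw [add_sub_cancel, add_zero]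
    _ ≤ sValue T n + sValue (S - T) 0 := sValue_add_le _ _ _ _
    _ ≤ sValue T n + dist S T := by
        rw [dist_eq_norm]
        gcongr
        exact sValue_le_norm _ _

end SValue

section FiniteRank

variable {E : Type} [NormedAddCommGroup E] [InnerProductSpace ℂ E]

theorem rank_sum_smul_rankOne_le {ι : Type*} (c : ι → ℂ) (g h : ι → E) (s : Finset ι) :
    (∑ j ∈ s, c j • rankOne ℂ (g j) (h j)).toLinearMap.rank ≤ s.card := by
  classical
  have hrange : LinearMap.range (∑ j ∈ s, c j • rankOne ℂ (g j) (h j)).toLinearMap ≤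
      Submodule.span ℂ (s.image g) := by
    rintro _ ⟨x, rfl⟩
    simp only [ContinuousLinearMap.coe_coe, sum_apply, smul_apply,
      InnerProductSpace.rankOne_apply]
    exact sum_mem fun j hj => Submodule.smul_mem _ _ <| Submodule.smul_mem _ _ <|
      Submodule.subset_span (Finset.mem_coe.mpr (Finset.mem_image_of_mem g hj))
  calc (∑ j ∈ s, c j • rankOne ℂ (g j) (h j)).toLinearMap.rank
      ≤ Module.rank ℂ (Submodule.span ℂ (s.image g : Set E)) := Submodule.rank_mono hrange
    _ ≤ (s.image g).card := rank_span_finset_le _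
    _ ≤ s.card := by exact_mod_cast Finset.card_image_le

theorem norm_sum_smul_rankOne_le {ι : Type*} {g h : ι → E} (hg : Orthonormal ℂ g)
    (hh : Orthonormal ℂ h) {c : ι → ℂ} {s : Finset ι} {M : ℝ} (hM : 0 ≤ M)
    (hc : ∀ j ∈ s, ‖c j‖ ≤ M) : ‖∑ j ∈ s, c j • rankOne ℂ (g j) (h j)‖ ≤ M := by
  refine ContinuousLinearMap.opNorm_le_bound _ hM fun x => ?_
  refine le_of_sq_le_sq ?_ (by positivity)
  calc ‖(∑ j ∈ s, c j • rankOne ℂ (g j) (h j)) x‖ ^ 2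
      = ‖∑ j ∈ s, (c j * ⟪h j, x⟫_ℂ) • g j‖ ^ 2 := by
        simp only [sum_apply, smul_apply, InnerProductSpace.rankOne_apply, smul_smul]
    _ = ∑ j ∈ s, ‖c j‖ ^ 2 * ‖⟪h j, x⟫_ℂ‖ ^ 2 := by
        simp only [norm_sum_smul_sq_of_orthonormal hg, norm_mul, mul_pow]
    _ ≤ ∑ j ∈ s, M ^ 2 * ‖⟪h j, x⟫_ℂ‖ ^ 2 := by
        gcongr with j hj
        exact hc j hj
    _ = M ^ 2 * ∑ j ∈ s, ‖⟪h j, x⟫_ℂ‖ ^ 2 := by rw [Finset.mul_sum]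
    _ ≤ M ^ 2 * ‖x‖ ^ 2 := by
        gcongr
        exact hh.sum_inner_products_le x
    _ = (M * ‖x‖) ^ 2 := by rw [mul_pow]

theorem exists_ne_zero_apply_sum_smul_eq_zero {n : ℕ} {F : E →L[ℂ] E}
    (hF : F.toLinearMap.rank ≤ n) (v : Fin (n + 1) → E) :
    ∃ t : Fin (n + 1) → ℂ, t ≠ 0 ∧ F (∑ j, t j • v j) = 0 := by
  have : FiniteDimensional ℂ (LinearMap.range F.toLinearMap) :=
    Module.rank_lt_aleph0_iff.mp (hF.trans_lt Cardinal.natCast_lt_aleph0)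
  have hfin : Module.finrank ℂ (LinearMap.range F.toLinearMap) ≤ n :=
    Module.finrank_le_of_rank_le hF
  have hker := LinearMap.ker_ne_bot_of_finrank_lt
    (f := F.toLinearMap.rangeRestrict ∘ₗ Fintype.linearCombination ℂ v)
    (by simpa using Nat.lt_succ_of_le hfin)
  obtain ⟨t, ht, ht0⟩ := (Submodule.ne_bot_iff _).mp hker
  exact ⟨t, ht0, congrArg Subtype.val (LinearMap.mem_ker.mp ht)⟩

/-- A singular value decomposition `T = ∑ j, a j ⟪h j, ·⟫ g j` of a finite-rank operator. -/
structure IsSVD (T : E →L[ℂ] E) {r : ℕ} (a : Fin r → ℝ) (g h : Fin r → E) : Prop where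
  antitone : Antitone a
  nonneg : ∀ j, 0 ≤ a j
  left : Orthonormal ℂ g
  right : Orthonormal ℂ h
  eq_sum : T = ∑ j, (a j : ℂ) • rankOne ℂ (g j) (h j)

namespace IsSVD

variable {T : E →L[ℂ] E} {r : ℕ} {a : Fin r → ℝ} {g h : Fin r → E}

theorem apply_right (hT : IsSVD T a g h) (i : Fin r) : T (h i) = (a i : ℂ) • g i := by
  rw [hT.eq_sum, sum_apply, Finset.sum_eq_single i]
  · simp [hT.right.1 i]
  · intro j _ hj
    simp [hT.right.2 hj]
  · simp

theorem inner_left_apply_right (hT : IsSVD T a g h) (i : Fin r) : ⟪g i, T (h i)⟫_ℂ = a i := by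
  rw [hT.apply_right, inner_smul_right, inner_self_eq_norm_sq_to_K, hT.left.1 i]
  simp

theorem sValue_le (hT : IsSVD T a g h) {n : ℕ} {M : ℝ} (hM : 0 ≤ M)
    (haM : ∀ j : Fin r, n ≤ j → a j ≤ M) : sValue T n ≤ M := by
  let s : Finset (Fin r) := {j | (j : ℕ) < n}
  have hcard : s.card ≤ n := by
    simpa using Finset.card_le_card_of_injOn (t := Finset.range n) (fun j : Fin r => (j : ℕ))
      (by simp [s, Set.MapsTo]) Fin.val_injective.injOn
  refine (sValue_le_norm_sub (F := ∑ j ∈ s, (a j : ℂ) • rankOne ℂ (g j) (h j))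
    ((rank_sum_smul_rankOne_le _ _ _ _).trans (by exact_mod_cast hcard))).trans ?_
  rw [hT.eq_sum, ← Finset.sum_compl_add_sum s, add_sub_cancel_right]
  refine norm_sum_smul_rankOne_le hT.left hT.right hM fun j hj => ?_
  rw [Complex.norm_of_nonneg (hT.nonneg j)]
  exact haM j (by simpa [s] using hj)

theorem sValue_eq_zero (hT : IsSVD T a g h) {n : ℕ} (hn : r ≤ n) : sValue T n = 0 :=
  (hT.sValue_le le_rfl fun j hj => absurd j.2 (by lia)).antisymm (sValue_nonneg T n)

theorem mul_norm_le_norm_apply (hT : IsSVD T a g h) (i : Fin r) {ι : Type*} {s : Finset ι}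
    {f : ι → Fin r} (hf : Function.Injective f) (hfi : ∀ j ∈ s, f j ≤ i) (t : ι → ℂ) :
    a i * ‖∑ j ∈ s, t j • h (f j)‖ ≤ ‖T (∑ j ∈ s, t j • h (f j))‖ := by
  have hg : Orthonormal ℂ fun j => g (f j) := hT.left.comp f hf
  have hh : Orthonormal ℂ fun j => h (f j) := hT.right.comp f hf
  refine le_of_sq_le_sq ?_ (norm_nonneg _)
  calc (a i * ‖∑ j ∈ s, t j • h (f j)‖) ^ 2 = ∑ j ∈ s, ‖t j‖ ^ 2 * a i ^ 2 := by
        rw [mul_pow, norm_sum_smul_sq_of_orthonormal hh, Finset.mul_sum]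
        simp only [mul_comm]
    _ ≤ ∑ j ∈ s, ‖t j‖ ^ 2 * a (f j) ^ 2 := by
        gcongr with j hj
        exacts [hT.nonneg i, hT.antitone (hfi j hj)]
    _ = ‖∑ j ∈ s, (t j * a (f j)) • g (f j)‖ ^ 2 := by
        simp only [norm_sum_smul_sq_of_orthonormal hg, norm_mul, mul_pow,
          Complex.norm_of_nonneg (hT.nonneg _)]
    _ = ‖T (∑ j ∈ s, t j • h (f j))‖ ^ 2 := by
        simp only [map_sum, map_smul, hT.apply_right, smul_smul]

theorem sValue_eq (hT : IsSVD T a g h) (i : Fin r) : sValue T i = a i := by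
  refine (hT.sValue_le (hT.nonneg i) fun j hj => hT.antitone hj).antisymm ?_
  refine le_sValue fun F hF => ?_
  let f : Fin ((i : ℕ) + 1) → Fin r := Fin.castLE i.2
  have hf : Function.Injective f := Fin.castLE_injective i.2
  obtain ⟨t, ht, hFt⟩ := exists_ne_zero_apply_sum_smul_eq_zero hF (h ∘ f)
  set x := ∑ j, t j • (h ∘ f) j
  have hx : x ≠ 0 := fun hx0 =>
    ht (funext (Fintype.linearIndependent_iff.mp (hT.right.comp f hf).linearIndependent t hx0))
  refine le_of_mul_le_mul_right ?_ (norm_pos_iff.mpr hx)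
  calc a i * ‖x‖ ≤ ‖T x‖ :=
        hT.mul_norm_le_norm_apply i hf (fun j _ => Fin.le_def.mpr (Nat.lt_succ_iff.mp j.2)) t
    _ = ‖(T - F) x‖ := by rw [sub_apply, hFt, sub_zero]
    _ ≤ ‖T - F‖ * ‖x‖ := (T - F).le_opNorm x

theorem hasSum_sValue_rpow (hT : IsSVD T a g h) {p : ℝ} (hp : p ≠ 0) :
    HasSum (fun n => sValue T n ^ p) (∑ j, a j ^ p) := by
  simp_rw [← hT.sValue_eq, Fin.sum_univ_eq_sum_range fun n => sValue T n ^ p]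
  refine hasSum_sum_of_ne_finset_zero fun n hn => ?_
  rw [hT.sValue_eq_zero (by simpa using hn), Real.zero_rpow hp]

theorem schattenNorm_rpow (hT : IsSVD T a g h) {p : ℝ} (hp : p ≠ 0) (q : ℝ) :
    schattenNorm p T ^ q = (∑ j, a j ^ p) ^ (q / p) := by
  rw [schattenNorm, (hT.hasSum_sValue_rpow hp).tsum_eq, ← Real.rpow_mul, one_div_mul_eq_div]
  exact Finset.sum_nonneg fun j _ => Real.rpow_nonneg (hT.nonneg j) p

end IsSVD

open ContinuousLinearMap (adjoint)

theorem exists_orthonormal_inner_adjoint_eq [CompleteSpace E] (T : E →L[ℂ] E)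
    [FiniteDimensional ℂ (LinearMap.range T.toLinearMap)] :
    ∃ (r : ℕ) (l : Fin r → ℝ) (e : OrthonormalBasis (Fin r) ℂ (LinearMap.range T.toLinearMap)),
      Antitone l ∧ ∀ i j,
        ⟪adjoint T (e i), adjoint T (e j)⟫_ℂ = if i = j then (l j : ℂ) else 0 := by
  set W := LinearMap.range T.toLinearMap
  let G : W →ₗ[ℂ] W := T.toLinearMap.rangeRestrict ∘ₗ (adjoint T).toLinearMap ∘ₗ W.subtype
  have hGinner : ∀ v w : W, ⟪v, G w⟫_ℂ = ⟪adjoint T v, adjoint T w⟫_ℂ := fun v w => by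
    rw [ContinuousLinearMap.adjoint_inner_left]
    rfl
  have hG : G.IsSymmetric := fun v w => by
    rw [hGinner, ← inner_conj_symm, hGinner, inner_conj_symm]
  refine ⟨_, hG.eigenvalues rfl, hG.eigenvectorBasis rfl, hG.eigenvalues_antitone rfl,
    fun i j => ?_⟩
  rw [← hGinner, hG.apply_eigenvectorBasis, inner_smul_right,
    orthonormal_iff_ite.mp (hG.eigenvectorBasis rfl).orthonormal i j]
  simp

theorem adjoint_ne_zero_of_mem_range [CompleteSpace E] {T : E →L[ℂ] E} {y : E}
    (hy : y ∈ LinearMap.range T.toLinearMap) (hy0 : y ≠ 0) : adjoint T y ≠ 0 := by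
  obtain ⟨x, rfl⟩ := hy
  intro h
  refine hy0 (inner_self_eq_zero (𝕜 := ℂ).mp ?_)
  calc ⟪T x, T x⟫_ℂ = ⟪adjoint T (T x), x⟫_ℂ := (T.adjoint_inner_left x (T x)).symm
    _ = 0 := by rw [show adjoint T (T x) = 0 from h, inner_zero_left]

theorem exists_isSVD [CompleteSpace E] (T : E →L[ℂ] E)
    [FiniteDimensional ℂ (LinearMap.range T.toLinearMap)] :
    ∃ (r : ℕ) (a : Fin r → ℝ) (g h : Fin r → E), IsSVD T a g h := by
  obtain ⟨r, l, e, hl, he⟩ := exists_orthonormal_inner_adjoint_eq T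
  have hnorm : ∀ j, ‖adjoint T (e j)‖ ^ 2 = l j := fun j =>
    Complex.ofReal_injective (by simpa [inner_self_eq_norm_sq_to_K] using he j j)
  have hpos : ∀ j, 0 < ‖adjoint T (e j)‖ := fun j =>
    norm_pos_iff.mpr (adjoint_ne_zero_of_mem_range (e j).2 (by simpa using e.orthonormal.ne_zero j))
  have hne : ∀ j, (‖adjoint T (e j)‖ : ℂ) ≠ 0 := fun j => by exact_mod_cast (hpos j).ne'
  refine ⟨r, fun j => ‖adjoint T (e j)‖, fun j => e j,
    fun j => (‖adjoint T (e j)‖ : ℂ)⁻¹ • adjoint T (e j), ?_, fun j => (hpos j).le,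
    e.orthonormal.comp_linearIsometry (LinearMap.range T.toLinearMap).subtypeₗᵢ, ?_, ?_⟩
  · intro i j hij
    exact le_of_sq_le_sq (by simpa only [hnorm] using hl hij) (norm_nonneg _)
  · rw [orthonormal_iff_ite]
    intro i j
    rw [inner_smul_left, inner_smul_right, he]
    split_ifs with hij
    · rw [hij, ← hnorm, map_inv₀, Complex.conj_ofReal]
      have := hne j
      push_cast
      field_simp
    · simp
  · ext x
    have hx := congrArg Subtype.val (e.sum_repr' (T.toLinearMap.rangeRestrict x))
    rw [Submodule.coe_sum] at hx
    refine hx.symm.trans ?_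
    rw [sum_apply]
    refine Finset.sum_congr rfl fun j _ => ?_
    rw [smul_apply, InnerProductSpace.rankOne_apply, smul_smul, inner_smul_left, map_inv₀,
      Complex.conj_ofReal, mul_inv_cancel_left₀ (hne j), ContinuousLinearMap.adjoint_inner_left]
    rfl

end FiniteRank

section FiniteRankInequality

variable {E : Type} [NormedAddCommGroup E] [InnerProductSpace ℂ E] {β ι : Type*}

theorem IsSVD.inner_sum_smul_hilbertSchmidtTensor {α : Type*} (d : HilbertBasis α ℂ E)
    {T : E →L[ℂ] E} {r : ℕ} {a : Fin r → ℝ} {g h : Fin r → E} (hT : IsSVD T a g h) (f e : E) :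
    ⟪hilbertSchmidtTensor d f e, ∑ j, (a j : ℂ) • hilbertSchmidtTensor d (g j) (h j)⟫_ℂ =
      ⟪f, T e⟫_ℂ := by
  calc ⟪hilbertSchmidtTensor d f e, ∑ j, (a j : ℂ) • hilbertSchmidtTensor d (g j) (h j)⟫_ℂ
      = ∑ j, ⟪hilbertSchmidtTensor d f e, (a j : ℂ) • hilbertSchmidtTensor d (g j) (h j)⟫_ℂ :=
        inner_sum _ _ _
    _ = ∑ j, a j * (⟪f, g j⟫_ℂ * ⟪h j, e⟫_ℂ) := Finset.sum_congr rfl fun j _ => by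
        rw [← inner_hilbertSchmidtTensor d]
        exact inner_smul_right (hilbertSchmidtTensor d f e) _ _
    _ = ⟪f, T e⟫_ℂ := by
        simp only [hT.eq_sum, sum_apply, smul_apply, InnerProductSpace.rankOne_apply, inner_sum,
          inner_smul_right, mul_comm]

theorem finiteDimensional_range_sum_smul [Fintype ι] {T : ι → E →L[ℂ] E}
    (hT : ∀ i, FiniteDimensional ℂ (LinearMap.range (T i).toLinearMap)) (c : ι → ℂ) :
    FiniteDimensional ℂ (LinearMap.range (∑ i, c i • T i).toLinearMap) := by
  refine Submodule.finiteDimensional_of_le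
    (S₂ := ⨆ i, LinearMap.range (T i).toLinearMap) ?_
  rintro _ ⟨x, rfl⟩
  simp only [ContinuousLinearMap.coe_coe, sum_apply, smul_apply]
  exact sum_mem fun i _ => Submodule.smul_mem _ _ (Submodule.mem_iSup_of_mem i ⟨x, rfl⟩)

variable [CompleteSpace E] [Fintype β] [Fintype ι] {W : Matrix β ι ℂ} {C₀ C₁ p q : ℝ}

theorem mixedNorm_schattenNorm_sum_smul_le_of_finiteDimensional (hC₀ : 0 ≤ C₀) (hC₁ : 0 ≤ C₁)
    (hW₀ : ∀ b i, ‖W b i‖ ≤ C₀)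
    (hW₁ : ∀ x, ∑ b, ‖(W *ᵥ x) b‖ ^ 2 ≤ C₁ ^ 2 * ∑ i, ‖x i‖ ^ 2)
    (hpq : p.HolderConjugate q) (hp : p ≤ 2) {T : ι → E →L[ℂ] E}
    (hT : ∀ i, FiniteDimensional ℂ (LinearMap.range (T i).toLinearMap)) :
    (∑ b, schattenNorm p (∑ i, W b i • T i) ^ q) ^ (1 / q) ≤
      C₀ ^ (1 - 2 / q) * C₁ ^ (2 / q) * (∑ i, schattenNorm p (T i) ^ p) ^ (1 / p) := by
  obtain ⟨w, d, -⟩ := exists_hilbertBasis ℂ E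
  have hS := fun b => finiteDimensional_range_sum_smul hT (W b)
  choose r a g h hsvd using fun i => exists_isSVD (T i)
  choose r' a' g' h' hsvd' using fun b => exists_isSVD (∑ i, W b i • T i)
  have hsingular : ∀ b k, ⟪hilbertSchmidtTensor d (g' b k) (h' b k), ∑ i, W b i •
      ∑ j, (a i j : ℂ) • hilbertSchmidtTensor d (g i j) (h i j)⟫_ℂ = a' b k := fun b k => by
    rw [← (hsvd' b).inner_left_apply_right, sum_apply, inner_sum, inner_sum]
    refine Finset.sum_congr rfl fun i _ => ?_
    rw [smul_apply, inner_smul_right, ← (hsvd i).inner_sum_smul_hilbertSchmidtTensor d]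
    exact inner_smul_right (hilbertSchmidtTensor d (g' b k) (h' b k)) _ _
  have hmixed := mixedNorm_inner_sum_smul_le hC₀ hC₁ hW₀ hW₁
    (fun b => orthonormal_hilbertSchmidtTensor d (hsvd' b).left (hsvd' b).right)
    (fun i => orthonormal_hilbertSchmidtTensor d (hsvd i).left (hsvd i).right)
    (fun b i j => by
      simpa only [inner_hilbertSchmidtTensor] using sum_norm_inner_mul_inner_le_one
        (hsvd' b).left (hsvd' b).right ((hsvd i).left.1 j) ((hsvd i).right.1 j))
    hpq hp fun t => (a t.1 t.2 : ℂ)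
  simp only [hsingular, Complex.norm_of_nonneg ((hsvd _).nonneg _),
    Complex.norm_of_nonneg ((hsvd' _).nonneg _)] at hmixed
  simpa only [(hsvd _).schattenNorm_rpow hpq.ne_zero, (hsvd' _).schattenNorm_rpow hpq.ne_zero,
    div_self hpq.ne_zero, Real.rpow_one] using hmixed

end FiniteRankInequality

theorem add_rpow_le_two_rpow_mul {x y p : ℝ} (hx : 0 ≤ x) (hy : 0 ≤ y) (hp : 0 ≤ p) :
    (x + y) ^ p ≤ 2 ^ p * (x ^ p + y ^ p) := by
  calc (x + y) ^ p ≤ (2 * max x y) ^ p := by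
        gcongr
        linarith [le_max_left x y, le_max_right x y]
    _ = 2 ^ p * max x y ^ p := Real.mul_rpow zero_le_two (le_max_of_le_left hx)
    _ ≤ 2 ^ p * (x ^ p + y ^ p) := by
        gcongr
        rcases max_choice x y with h | h <;> rw [h]
        · exact le_add_of_nonneg_right (Real.rpow_nonneg hy p)
        · exact le_add_of_nonneg_left (Real.rpow_nonneg hx p)

theorem summable_of_even_odd_le {f g : ℕ → ℝ} (hf : ∀ n, 0 ≤ f n) (hg : Summable g)
    (heven : ∀ n, f (2 * n) ≤ g n) (hodd : ∀ n, f (2 * n + 1) ≤ g n) : Summable f :=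
  ((hg.of_nonneg_of_le (fun _ => hf _) heven).hasSum.even_add_odd
    (hg.of_nonneg_of_le (fun _ => hf _) hodd).hasSum).summable

section SchattenClass

variable {E : Type} [NormedAddCommGroup E] [InnerProductSpace ℂ E] {p : ℝ} {S T : E →L[ℂ] E}

namespace MemSp

theorem add (hp : 0 ≤ p) (hS : MemSp p S) (hT : MemSp p T) : MemSp p (S + T) := by
  have hbound : ∀ m n, n + n ≤ m →
      sValue (S + T) m ^ p ≤ 2 ^ p * (sValue S n ^ p + sValue T n ^ p) := fun m n hmn =>
    calc sValue (S + T) m ^ p ≤ (sValue S n + sValue T n) ^ p :=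
          Real.rpow_le_rpow (sValue_nonneg _ _)
            ((antitone_sValue _ hmn).trans (sValue_add_le S T n n)) hp
      _ ≤ 2 ^ p * (sValue S n ^ p + sValue T n ^ p) :=
          add_rpow_le_two_rpow_mul (sValue_nonneg S n) (sValue_nonneg T n) hp
  exact ⟨hS.1.add hT.1, summable_of_even_odd_le
    (fun n => Real.rpow_nonneg (sValue_nonneg _ n) p) ((hS.2.add hT.2).mul_left (2 ^ p))
    (fun n => hbound _ n (by lia)) fun n => hbound _ n (by lia)⟩

theorem smul (hp : 0 ≤ p) (c : ℂ) (hT : MemSp p T) : MemSp p (c • T) := by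
  refine ⟨hT.1.smul c, (hT.2.mul_left (‖c‖ ^ p)).of_nonneg_of_le
    (fun n => Real.rpow_nonneg (sValue_nonneg _ n) p) fun n => ?_⟩
  rw [← Real.mul_rpow (norm_nonneg c) (sValue_nonneg T n)]
  exact Real.rpow_le_rpow (sValue_nonneg _ n) (sValue_smul_le c T n) hp

theorem zero (hp : p ≠ 0) : MemSp p (0 : E →L[ℂ] E) := by
  have hs : ∀ n, sValue (0 : E →L[ℂ] E) n = 0 := fun n =>
    ((sValue_le_norm 0 n).trans_eq norm_zero).antisymm (sValue_nonneg 0 n)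
  exact ⟨isCompactOperator_zero, by simp only [hs, Real.zero_rpow hp, summable_zero]⟩

theorem sum_smul {ι : Type*} [Fintype ι] (hp : 0 < p) {T : ι → E →L[ℂ] E}
    (hT : ∀ i, MemSp p (T i)) (c : ι → ℂ) : MemSp p (∑ i, c i • T i) :=
  Finset.sum_induction _ (MemSp p) (fun _ _ => add hp.le) (zero hp.ne')
    fun i _ => (hT i).smul hp.le (c i)

theorem tendsto_sValue (hp : 0 < p) (hT : MemSp p T) : Tendsto (sValue T) atTop (𝓝 0) := by
  have h := hT.2.tendsto_atTop_zero.rpow_const (p := p⁻¹) (Or.inr (inv_nonneg.mpr hp.le))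
  simpa only [Real.rpow_rpow_inv (sValue_nonneg T _) hp.ne', Real.zero_rpow (inv_ne_zero hp.ne')]
    using h

end MemSp

/-- The orthogonal projection onto the span of a finite set of vectors.  Along the directed
set of all finite sets these projections compress an operator to approximants of finite rank. -/
noncomputable def spanProjection (s : Finset E) : E →L[ℂ] E :=
  (Submodule.span ℂ (s : Set E)).starProjection

theorem norm_spanProjection_le (s : Finset E) : ‖spanProjection s‖ ≤ 1 :=
  Submodule.starProjection_norm_le _

theorem finiteDimensional_range_spanProjection_comp (s : Finset E) (T : E →L[ℂ] E) :
    FiniteDimensional ℂ (LinearMap.range (spanProjection s ∘L T).toLinearMap) := by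
  refine Submodule.finiteDimensional_of_le (S₂ := Submodule.span ℂ (s : Set E)) ?_
  rintro _ ⟨x, rfl⟩
  exact Submodule.starProjection_apply_mem _ (T x)

theorem norm_sub_spanProjection_comp_le {s : Finset E} {T F : E →L[ℂ] E}
    (hF : LinearMap.range F.toLinearMap ≤ Submodule.span ℂ (s : Set E)) :
    ‖T - spanProjection s ∘L T‖ ≤ ‖T - F‖ := by
  set V := Submodule.span ℂ (s : Set E) with hV
  refine ContinuousLinearMap.opNorm_le_bound _ (norm_nonneg _) fun x => ?_
  have hFx : V.starProjection (F x) = F x :=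
    Submodule.starProjection_eq_self_iff.mpr (hF ⟨x, rfl⟩)
  calc ‖(T - spanProjection s ∘L T) x‖ = ‖Vᗮ.starProjection ((T - F) x)‖ := by
        rw [Submodule.starProjection_orthogonal_val]
        simp only [spanProjection, sub_apply, ContinuousLinearMap.comp_apply, map_sub, ← hV, hFx]
        abel_nf
    _ ≤ ‖(T - F) x‖ := Vᗮ.norm_starProjection_apply_le _
    _ ≤ ‖T - F‖ * ‖x‖ := (T - F).le_opNorm x

theorem tendsto_spanProjection_comp (hT : Tendsto (sValue T) atTop (𝓝 0)) :
    Tendsto (fun s => spanProjection s ∘L T) atTop (𝓝 T) := by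
  refine Metric.tendsto_nhds.mpr fun ε hε => ?_
  obtain ⟨n, hn⟩ := (hT.eventually (gt_mem_nhds hε)).exists
  obtain ⟨F, hF, hTF⟩ := exists_norm_sub_lt_of_sValue_lt hn
  have : FiniteDimensional ℂ (LinearMap.range F.toLinearMap) :=
    Module.rank_lt_aleph0_iff.mp (hF.trans_lt Cardinal.natCast_lt_aleph0)
  obtain ⟨s, hs⟩ := Module.Finite.iff_fg.mp this
  filter_upwards [eventually_ge_atTop s] with s' hss'
  rw [dist_comm, dist_eq_norm]
  refine (norm_sub_spanProjection_comp_le ?_).trans_lt hTF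
  rw [← hs]
  exact Submodule.span_mono (Finset.coe_subset.mpr hss')

theorem MemSp.tendsto_schattenNorm_spanProjection_comp (hp : 0 < p) (hT : MemSp p T) :
    Tendsto (fun s => schattenNorm p (spanProjection s ∘L T)) atTop
      (𝓝 (schattenNorm p T)) := by
  refine Tendsto.rpow_const ?_ (Or.inr (one_div_nonneg.mpr hp.le))
  refine tendsto_tsum_of_dominated_convergence hT.2 (fun n => ?_) (.of_forall fun s n => ?_)
  · exact (((continuous_sValue n).tendsto T).comp
      (tendsto_spanProjection_comp (hT.tendsto_sValue hp))).rpow_const (Or.inr hp.le)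
  · rw [Real.norm_of_nonneg (Real.rpow_nonneg (sValue_nonneg _ n) p)]
    exact Real.rpow_le_rpow (sValue_nonneg _ n)
      (sValue_comp_le (norm_spanProjection_le s) T n) hp.le

variable [CompleteSpace E] {β ι : Type*} [Fintype β] [Fintype ι] {W : Matrix β ι ℂ}
  {C₀ C₁ q : ℝ}

theorem mixedNorm_schattenNorm_sum_smul_le (hC₀ : 0 ≤ C₀) (hC₁ : 0 ≤ C₁)
    (hW₀ : ∀ b i, ‖W b i‖ ≤ C₀)
    (hW₁ : ∀ x, ∑ b, ‖(W *ᵥ x) b‖ ^ 2 ≤ C₁ ^ 2 * ∑ i, ‖x i‖ ^ 2)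
    (hpq : p.HolderConjugate q) (hp : p ≤ 2) {T : ι → E →L[ℂ] E} (hT : ∀ i, MemSp p (T i)) :
    (∑ b, schattenNorm p (∑ i, W b i • T i) ^ q) ^ (1 / q) ≤
      C₀ ^ (1 - 2 / q) * C₁ ^ (2 / q) * (∑ i, schattenNorm p (T i) ^ p) ^ (1 / p) := by
  have hcomp : ∀ (s : Finset E) b, spanProjection s ∘L ∑ i, W b i • T i =
      ∑ i, W b i • (spanProjection s ∘L T i) := fun s b => by
    simp only [ContinuousLinearMap.comp_finsetSum, ContinuousLinearMap.comp_smul]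
  refine le_of_tendsto_of_tendsto'
    (f := fun s => (∑ b, schattenNorm p (spanProjection s ∘L ∑ i, W b i • T i) ^ q) ^ (1 / q))
    (g := fun s => C₀ ^ (1 - 2 / q) * C₁ ^ (2 / q) *
      (∑ i, schattenNorm p (spanProjection s ∘L T i) ^ p) ^ (1 / p)) (b := atTop)
    ?_ ?_ fun s => ?_
  · refine Tendsto.rpow_const (tendsto_finsetSum _ fun b _ => ?_)
      (Or.inr (one_div_nonneg.mpr hpq.symm.nonneg))
    exact ((MemSp.sum_smul hpq.pos hT (W b)).tendsto_schattenNorm_spanProjection_comp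
      hpq.pos).rpow_const (Or.inr hpq.symm.nonneg)
  · refine (Tendsto.rpow_const (tendsto_finsetSum _ fun i _ => ?_)
      (Or.inr (one_div_nonneg.mpr hpq.nonneg))).const_mul _
    exact ((hT i).tendsto_schattenNorm_spanProjection_comp hpq.pos).rpow_const
      (Or.inr hpq.nonneg)
  · simp only [hcomp]
    exact mixedNorm_schattenNorm_sum_smul_le_of_finiteDimensional hC₀ hC₁ hW₀ hW₁ hpq hp
      fun i => finiteDimensional_range_spanProjection_comp s (T i)

end SchattenClass

/-- The `2 × 2` Hadamard matrix, which maps a pair `(x, y)` to `(x + y, x - y)`. -/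
def hadamardMatrix : Matrix (Fin 2) (Fin 2) ℂ :=
  !![1, 1; 1, -1]

theorem norm_hadamardMatrix_apply (b i : Fin 2) : ‖hadamardMatrix b i‖ = 1 := by
  fin_cases b <;> fin_cases i <;> simp [hadamardMatrix]

theorem sum_norm_hadamardMatrix_mulVec_sq (x : Fin 2 → ℂ) :
    ∑ b, ‖(hadamardMatrix *ᵥ x) b‖ ^ 2 = 2 * ∑ i, ‖x i‖ ^ 2 := by
  have h := parallelogram_law_with_norm ℝ (x 0) (x 1)
  simp only [hadamardMatrix, Matrix.mulVec, dotProduct, Fin.sum_univ_two, Matrix.of_apply,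
    Matrix.cons_val', Matrix.cons_val_zero, Matrix.cons_val_one, one_mul, neg_mul,
    ← sub_eq_add_neg]
  linarith

theorem stmt11_general {E : Type} [NormedAddCommGroup E] [InnerProductSpace ℂ E]
    [CompleteSpace E] (p q : ℝ) (hp1 : 1 < p) (hp2 : p ≤ 2) (hq : q = p / (p - 1))
    (T₁ T₂ : E →L[ℂ] E) (hT₁ : MemSp p T₁) (hT₂ : MemSp p T₂) :
    (schattenNorm p (T₁ + T₂) ^ q + schattenNorm p (T₁ - T₂) ^ q) ^ (1 / q) ≤
      (2 : ℝ) ^ (1 / q) * (schattenNorm p T₁ ^ p + schattenNorm p T₂ ^ p) ^ (1 / p) := by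
  have hpq : p.HolderConjugate q := (Real.holderConjugate_iff_eq_conjExponent hp1).mpr hq
  have hconst : (√2 : ℝ) ^ (2 / q) = 2 ^ (1 / q) := by
    rw [Real.sqrt_eq_rpow, ← Real.rpow_mul zero_le_two]
    ring_nf
  have h := mixedNorm_schattenNorm_sum_smul_le zero_le_one (Real.sqrt_nonneg 2)
    (fun b i => (norm_hadamardMatrix_apply b i).le)
    (fun x => by rw [sum_norm_hadamardMatrix_mulVec_sq, Real.sq_sqrt zero_le_two])
    hpq hp2 (T := ![T₁, T₂]) (Fin.forall_fin_two.mpr ⟨hT₁, hT₂⟩)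
  simpa [hadamardMatrix, Fin.sum_univ_two, hconst, ← sub_eq_add_neg] using h

/-- Clarkson inequality for Schatten classes, case `1 < p ≤ 2`:
`(‖T₁+T₂‖_p^q + ‖T₁−T₂‖_p^q)^(1/q) ≤ 2^(1/q) (‖T₁‖_p^p + ‖T₂‖_p^p)^(1/p)`. -/
theorem stmt11 {H : Type} [NormedAddCommGroup H] [InnerProductSpace ℂ H]
    [CompleteSpace H] [TopologicalSpace.SeparableSpace H]
    (p q : ℝ) (hp1 : 1 < p) (hp2 : p ≤ 2) (hq : q = p / (p - 1))
    (T₁ T₂ : H →L[ℂ] H) (hT₁ : MemSp p T₁) (hT₂ : MemSp p T₂) :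
    (schattenNorm p (T₁ + T₂) ^ q + schattenNorm p (T₁ - T₂) ^ q) ^ (1 / q) ≤
      (2 : ℝ) ^ (1 / q) * (schattenNorm p T₁ ^ p + schattenNorm p T₂ ^ p) ^ (1 / p) :=
  stmt11_general p q hp1 hp2 hq T₁ T₂ hT₁ hT₂
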